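/- arXiv:1807.11837 — 5 statements merged into one kernel-verified Lean document; each statement's English description precedes it below -/
import Mathlib

section
/- For each fixed s with a+2 ≤ s ≤ b, the left-focal Green's function is strictly decreasing in its first argument: G_l(t, s) < G_l(t−1, s) for every t with a+2 ≤ t ≤ b. -/
/-- Rising factorial `rf x r = Γ(x+r)/Γ(x)`, with the convention `rf 0 r = 0`. -/
noncomputable def rf (x r : ℝ) : ℝ := if x = 0 then 0 else Real.Gamma (x + r) / Real.Gamma x

/-- The left-focal Green's function. -/
noncomputable def Gl (a b : ℤ) (α : ℝ) (t s : ℤ) : ℝ :=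
  if t ≤ s - 1 then
    (1 / Real.Gamma α) *
      (rf (b - s + 1 : ℝ) (α - 1) * rf (t - a : ℝ) (α - 2) / rf (b - a : ℝ) (α - 2))
  else
    (1 / Real.Gamma α) *
      (rf (b - s + 1 : ℝ) (α - 1) * rf (t - a : ℝ) (α - 2) / rf (b - a : ℝ) (α - 2) -
        rf (t - s + 1 : ℝ) (α - 1))

theorem rf_pos_aux (x r : ℝ) (hx : 0 < x) (hr : 0 < x + r) : 0 < rf x r := by
  unfold rf
  rw [if_neg hx.ne']
  exact div_pos (Real.Gamma_pos_of_pos hr) (Real.Gamma_pos_of_pos hx)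

theorem rf_succ_aux (x r : ℝ) (hx : 0 < x) (hr : 0 < x + r) :
    rf (x + 1) r = rf x r + rf x r * (r / x) := by
  unfold rf
  have h1 : x + 1 ≠ 0 := by positivity
  rw [if_neg hx.ne', if_neg h1, show x + 1 + r = (x + r) + 1 by ring,
    Real.Gamma_add_one hr.ne', Real.Gamma_add_one hx.ne']
  have := (Real.Gamma_pos_of_pos hx).ne'
  field_simp

theorem left_focal_green_decreasing (a b : ℤ) (hab : 2 ≤ b - a) (α : ℝ)
    (hα1 : 1 < α) (hα2 : α < 2) :
    ∀ s : ℤ, a + 2 ≤ s → s ≤ b →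
      ∀ t : ℤ, a + 2 ≤ t → t ≤ b → Gl a b α t s < Gl a b α (t - 1) s := by
  intro s hs1 hs2 t ht1 ht2
  have hab' : (2 : ℝ) ≤ b - a := by exact_mod_cast hab
  have hs2' : (s : ℝ) ≤ b := by exact_mod_cast hs2
  have ht1' : (a : ℝ) + 2 ≤ t := by exact_mod_cast ht1
  have hG : 0 < 1 / Real.Gamma α := one_div_pos.mpr (Real.Gamma_pos_of_pos (by linarith))
  have hp := rf_pos_aux (b - s + 1 : ℝ) (α - 1) (by linarith) (by linarith)
  have hq := rf_pos_aux (b - a : ℝ) (α - 2) (by linarith) (by linarith)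
  have hdec : rf (t - a : ℝ) (α - 2) < rf (t - 1 - a : ℝ) (α - 2) := by
    have h := rf_succ_aux (t - 1 - a : ℝ) (α - 2) (by linarith) (by linarith)
    have h0 := rf_pos_aux (t - 1 - a : ℝ) (α - 2) (by linarith) (by linarith)
    rw [show (t - 1 - a + 1 : ℝ) = t - a by ring] at h
    have : (α - 2) / (t - 1 - a : ℝ) < 0 := div_neg_of_neg_of_pos (by linarith) (by linarith)
    nlinarith
  have key : rf (b - s + 1 : ℝ) (α - 1) * rf (t - a : ℝ) (α - 2) / rf (b - a : ℝ) (α - 2)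
      < rf (b - s + 1 : ℝ) (α - 1) * rf (t - 1 - a : ℝ) (α - 2) / rf (b - a : ℝ) (α - 2) :=
    div_lt_div_of_pos_right (mul_lt_mul_of_pos_left hdec hp) hq
  unfold Gl
  push_cast
  rcases lt_trichotomy t s with h | h | h
  · rw [if_pos (by omega), if_pos (by omega)]
    exact mul_lt_mul_of_pos_left key hG
  · rw [if_neg (by omega), if_pos (by omega)]
    have := rf_pos_aux (t - s + 1 : ℝ) (α - 1) (by simp [h]) (by simp [h]; linarith)
    exact mul_lt_mul_of_pos_left (by linarith) hG
  · rw [if_neg (by omega), if_neg (by omega)]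
    have h' : (s : ℝ) + 1 ≤ t := by exact_mod_cast h
    have h1 := rf_succ_aux (t - s : ℝ) (α - 1) (by linarith) (by linarith)
    have h0 := rf_pos_aux (t - s : ℝ) (α - 1) (by linarith) (by linarith)
    have h2 : 0 < (α - 1) / (t - s : ℝ) := div_pos (by linarith) (by linarith)
    have h3 := mul_pos h0 h2
    rw [show (t - 1 - s + 1 : ℝ) = t - s by ring]
    exact mul_lt_mul_of_pos_left (by linarith) hG
end

section
/- (Lyapunov-type inequality, left-focal problem) Suppose u : N[a+1,b] → ℝ is not identically zero and satisfies the summation equation u(t) = ∑_{s=a+2}^{b} G_l(t, s) q(s) u(s) for every t with a+1 ≤ t ≤ b (this is the Green's-function form of the left-focal fractional boundary value problem ∇_a^α u(t) + q(t)u(t) = 0 for a+2 ≤ t ≤ b, with ∇_a^{α−1} u(a+1) = 0 and u(b) = 0). Then ∑_{s=a+2}^{b} |q(s)| ≥ (α − 1)/(b − a − 1). -/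
lemma rf_pos' (x r : ℝ) (hx : 1 ≤ x) (hr : -1 < r) : 0 < rf x r := by
  unfold rf
  rw [if_neg (by linarith)]
  exact div_pos (Real.Gamma_pos_of_pos (by linarith)) (Real.Gamma_pos_of_pos (by linarith))

lemma rf_step (x r : ℝ) (hx : 1 ≤ x) (hr : -1 < r) : rf (x + 1) r = (x + r) / x * rf x r := by
  unfold rf
  rw [if_neg (by linarith), if_neg (by linarith), Real.Gamma_add_one (by linarith),
    show x + 1 + r = (x + r) + 1 by ring, Real.Gamma_add_one (by linarith)]
  have := (Real.Gamma_pos_of_pos (show 0 < x by linarith)).ne'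
  have : x ≠ 0 := by linarith
  field_simp

lemma rf_mono (r : ℝ) (hr : 0 ≤ r) (m n : ℤ) (hm : 1 ≤ m) (hmn : m ≤ n) :
    rf (m : ℝ) r ≤ rf (n : ℝ) r := by
  induction n, hmn using Int.leInduction with
  | base => exact le_rfl
  | succ n hn ih =>
    refine ih.trans ?_
    have h1 : (1 : ℝ) ≤ n := by exact_mod_cast hm.trans hn
    push_cast
    rw [rf_step _ _ h1 (by linarith)]
    refine le_mul_of_one_le_left (rf_pos' _ _ h1 (by linarith)).le ?_
    rw [le_div_iff₀ (by linarith)]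
    linarith

lemma rf_anti (r : ℝ) (hr : -1 < r) (hr0 : r ≤ 0) (m n : ℤ) (hm : 1 ≤ m) (hmn : m ≤ n) :
    rf (n : ℝ) r ≤ rf (m : ℝ) r := by
  induction n, hmn using Int.leInduction with
  | base => exact le_rfl
  | succ n hn ih =>
    refine le_trans ?_ ih
    have h1 : (1 : ℝ) ≤ n := by exact_mod_cast hm.trans hn
    push_cast
    rw [rf_step _ _ h1 (by linarith)]
    refine mul_le_of_le_one_left (rf_pos' _ _ h1 (by linarith)).le ?_
    rw [div_le_iff₀ (by linarith)]
    linarith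

lemma Gl_bound (a b : ℤ) (hab : 2 ≤ b - a) (α : ℝ) (hα1 : 1 < α) (hα2 : α < 2) (t s : ℤ)
    (ht : a + 1 ≤ t) (htb : t ≤ b) (hs : a + 2 ≤ s) (hsb : s ≤ b) :
    |Gl a b α t s| ≤ (b - a - 1 : ℝ) / (α - 1) := by
  have hab' : (2 : ℝ) ≤ b - a := by exact_mod_cast hab
  have hG : 0 < Real.Gamma α := Real.Gamma_pos_of_pos (by linarith)
  have hG1 : 0 < Real.Gamma (α - 1) := Real.Gamma_pos_of_pos (by linarith)
  have hGG : Real.Gamma α = (α - 1) * Real.Gamma (α - 1) := by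
    rw [← Real.Gamma_add_one (by linarith)]; congr 1; ring
  have k1 := rf_mono (α - 1) (by linarith) (b - s + 1) (b - a - 1) (by omega) (by omega)
  have t1 := rf_anti (α - 2) (by linarith) (by linarith) 1 (t - a) (by omega) (by omega)
  have t2 := rf_anti (α - 2) (by linarith) (by linarith) (t - a) (b - a) (by omega) (by omega)
  push_cast at k1 t1 t2
  have p1 : 0 < rf (b - a : ℝ) (α - 2) := rf_pos' _ _ (by linarith) (by linarith)
  have hs1 : (s : ℝ) ≤ b := by exact_mod_cast hsb
  have p2 : 0 < rf (b - s + 1 : ℝ) (α - 1) := rf_pos' _ _ (by linarith) (by linarith)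
  have p3 : 0 < rf (t - a : ℝ) (α - 2) := p1.trans_le t2
  have e1 : rf 1 (α - 2) = Real.Gamma (α - 1) := by
    unfold rf
    rw [if_neg one_ne_zero, Real.Gamma_one, div_one]; congr 1; ring
  have e2 : rf (b - a - 1 : ℝ) (α - 1) = (b - a - 1) * rf (b - a : ℝ) (α - 2) := by
    unfold rf
    rw [if_neg (by linarith), if_neg (by linarith)]
    have h := Real.Gamma_add_one (s := (b - a - 1 : ℝ)) (by linarith)
    rw [sub_add_cancel] at h
    rw [h, show (b - a - 1 + (α - 1) : ℝ) = b - a + (α - 2) by ring]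
    have := (Real.Gamma_pos_of_pos (show (0 : ℝ) < b - a - 1 by linarith)).ne'
    have : (b - a - 1 : ℝ) ≠ 0 := by linarith
    field_simp
  have A1 : rf (b - s + 1 : ℝ) (α - 1) * rf (t - a : ℝ) (α - 2) / rf (b - a : ℝ) (α - 2)
      ≤ (b - a - 1) * Real.Gamma (α - 1) := by
    rw [div_le_iff₀ p1]
    calc _ ≤ rf (b - a - 1 : ℝ) (α - 1) * rf 1 (α - 2) :=
          mul_le_mul k1 t1 p3.le (p2.le.trans k1)
      _ = _ := by rw [e1, e2]; ring
  have A2 : rf (b - s + 1 : ℝ) (α - 1) ≤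
      rf (b - s + 1 : ℝ) (α - 1) * rf (t - a : ℝ) (α - 2) / rf (b - a : ℝ) (α - 2) := by
    rw [le_div_iff₀ p1]
    exact mul_le_mul_of_nonneg_left t2 p2.le
  have key : ∀ X : ℝ, 0 ≤ X → X ≤ (b - a - 1) * Real.Gamma (α - 1) →
      |1 / Real.Gamma α * X| ≤ (b - a - 1 : ℝ) / (α - 1) := by
    intro X h0 h1
    rw [abs_of_nonneg (by positivity), hGG, one_div_mul_eq_div,
      div_le_div_iff₀ (by rw [← hGG]; exact hG) (by linarith)]
    nlinarith
  unfold Gl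
  split_ifs with h
  · exact key _ (p2.le.trans A2) A1
  · have k2 := rf_mono (α - 1) (by linarith) (t - s + 1) (b - s + 1) (by omega) (by omega)
    push_cast at k2
    have hts : (s : ℝ) ≤ t := by exact_mod_cast (by omega : s ≤ t)
    have p4 : 0 < rf (t - s + 1 : ℝ) (α - 1) := rf_pos' _ _ (by linarith) (by linarith)
    exact key _ (by linarith) (by linarith)

theorem left_focal_lyapunov (a b : ℤ) (hab : 2 ≤ b - a) (α : ℝ)
    (hα1 : 1 < α) (hα2 : α < 2) (q : ℤ → ℝ) (u : ℤ → ℝ)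
    (hu : ∃ t : ℤ, a + 1 ≤ t ∧ t ≤ b ∧ u t ≠ 0)
    (heq : ∀ t : ℤ, a + 1 ≤ t → t ≤ b →
      u t = ∑ s ∈ Finset.Icc (a + 2) b, Gl a b α t s * q s * u s) :
    (α - 1) / (b - a - 1 : ℝ) ≤ ∑ s ∈ Finset.Icc (a + 2) b, |q s| := by
  have hab' : (2 : ℝ) ≤ b - a := by exact_mod_cast hab
  obtain ⟨m, hm, hmax⟩ := Finset.exists_max_image (Finset.Icc (a + 2) b) (fun s => |u s|)
    ⟨b, Finset.mem_Icc.2 ⟨by omega, le_rfl⟩⟩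
  have hm' := Finset.mem_Icc.1 hm
  have bound : ∀ t : ℤ, a + 1 ≤ t → t ≤ b →
      |u t| ≤ (b - a - 1 : ℝ) / (α - 1) * (∑ s ∈ Finset.Icc (a + 2) b, |q s|) * |u m| := by
    intro t h1 h2
    rw [heq t h1 h2, Finset.mul_sum, Finset.sum_mul]
    refine (Finset.abs_sum_le_sum_abs _ _).trans (Finset.sum_le_sum fun s hs => ?_)
    have hs' := Finset.mem_Icc.1 hs
    rw [abs_mul, abs_mul]
    have hC : (0 : ℝ) ≤ (b - a - 1 : ℝ) / (α - 1) := div_nonneg (by linarith) (by linarith)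
    have := Gl_bound a b hab α hα1 hα2 t s h1 h2 hs'.1 hs'.2
    have := hmax s hs
    gcongr
  have hpos : 0 < |u m| := by
    obtain ⟨t, h1, h2, h3⟩ := hu
    by_contra hn
    have h0 : |u m| = 0 := le_antisymm (not_lt.1 hn) (abs_nonneg _)
    have := bound t h1 h2
    rw [h0, mul_zero] at this
    exact h3 (abs_nonpos_iff.1 this)
  have h := bound m (by omega) hm'.2
  have h1 := (le_mul_iff_one_le_left hpos).1 h
  rw [div_mul_eq_mul_div, le_div_iff₀ (by linarith)] at h1
  rw [div_le_iff₀ (by linarith)]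
  linarith
end

section
/- For all (t, s) with a+1 ≤ t ≤ b and a+2 ≤ s ≤ b, the right-focal Green's function satisfies the bound G_r(t, s) ≤ rf(b−a−1, α−1)/Γ(α). -/
/-- The right-focal Green's function. -/
noncomputable def Gr (a : ℤ) (α : ℝ) (t s : ℤ) : ℝ :=
  if t ≤ s - 1 then
    (1 / Real.Gamma α) * rf (t - a - 1 : ℝ) (α - 1)
  else
    (1 / Real.Gamma α) * (rf (t - a - 1 : ℝ) (α - 1) - rf (t - s + 1 : ℝ) (α - 1))

theorem rf_nonneg_aux (x r : ℝ) (hx : 0 ≤ x) (hr : 0 < r) : 0 ≤ rf x r := by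
  unfold rf
  split_ifs with h
  · exact le_rfl
  · have hx' : 0 < x := lt_of_le_of_ne hx (Ne.symm h)
    exact div_nonneg (Real.Gamma_pos_of_pos (by linarith)).le (Real.Gamma_pos_of_pos hx').le

theorem rf_step_aux (x r : ℝ) (hx : 0 ≤ x) (hr : 0 < r) : rf x r ≤ rf (x + 1) r := by
  by_cases h : x = 0
  · have h0 : rf x r = 0 := by simp [rf, h]
    rw [h0]
    exact rf_nonneg_aux _ _ (by linarith) hr
  · have hx' : 0 < x := lt_of_le_of_ne hx (Ne.symm h)
    have h1 : x + 1 ≠ 0 := by linarith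
    have g1 := Real.Gamma_pos_of_pos hx'
    have g2 : 0 < Real.Gamma (x + r) := Real.Gamma_pos_of_pos (by linarith)
    have e : x + 1 + r = (x + r) + 1 := by ring
    have h2 : x + r ≠ 0 := by linarith
    simp only [rf, h, h1, if_false]
    rw [e, Real.Gamma_add_one h2, Real.Gamma_add_one h, div_le_div_iff₀ g1 (by positivity)]
    have := mul_pos (mul_pos hr g2) g1
    nlinarith

theorem rf_mono_aux (x r : ℝ) (hx : 0 ≤ x) (hr : 0 < r) (n : ℕ) : rf x r ≤ rf (x + n) r := by
  induction n with
  | zero => simp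
  | succ k ih =>
    have := rf_step_aux (x + k) r (by positivity) hr
    push_cast
    rw [← add_assoc]
    exact ih.trans this

theorem right_focal_green_bound (a b : ℤ) (hab : 2 ≤ b - a) (α : ℝ)
    (hα1 : 1 < α) (hα2 : α < 2) :
    ∀ t s : ℤ, a + 1 ≤ t → t ≤ b → a + 2 ≤ s → s ≤ b →
      Gr a α t s ≤ rf (b - a - 1 : ℝ) (α - 1) / Real.Gamma α := by
  intro t s h1 h2 h3 h4
  have hr : 0 < α - 1 := by linarith
  have hg : 0 < Real.Gamma α := Real.Gamma_pos_of_pos (by linarith)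
  have h1' : (a : ℝ) + 1 ≤ t := by exact_mod_cast h1
  obtain ⟨n, hn⟩ := Int.le.dest h2
  have hn' : (b : ℝ) = t + n := by exact_mod_cast hn.symm
  have key : rf (t - a - 1 : ℝ) (α - 1) ≤ rf (b - a - 1 : ℝ) (α - 1) := by
    have := rf_mono_aux (t - a - 1 : ℝ) (α - 1) (by linarith) hr n
    have e : (b - a - 1 : ℝ) = t - a - 1 + n := by rw [hn']; ring
    rwa [e]
  rw [div_eq_inv_mul, ← one_div]
  unfold Gr
  split_ifs with h
  · exact mul_le_mul_of_nonneg_left key (by positivity)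
  · have hs : (s : ℝ) ≤ t := by exact_mod_cast (by omega : s ≤ t)
    have := rf_nonneg_aux (t - s + 1 : ℝ) (α - 1) (by linarith) hr
    exact mul_le_mul_of_nonneg_left (by linarith) (by positivity)
end

section
/- For every t with a+1 ≤ t ≤ b, the row sum of the right-focal Green's function has the closed form ∑_{s=a+2}^{b} G_r(t, s) = (b − a − 1)·rf(t−a−1, α−1)/Γ(α) − rf(t−a−1, α)/Γ(α+1). -/
lemma rf_sum_aux (α : ℝ) (hα : 1 < α) (n : ℕ) :
    ∑ k ∈ Finset.range n, rf ((k : ℝ) + 1) (α - 1) = rf n α / α := by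
  have hα0 : α ≠ 0 := by linarith
  induction n with
  | zero => simp [rf]
  | succ n ih =>
    rw [Finset.sum_range_succ, ih]
    have hn : (0 : ℝ) ≤ n := Nat.cast_nonneg n
    have h1 : (n : ℝ) + 1 ≠ 0 := by positivity
    have h2 : (n : ℝ) + α ≠ 0 := by positivity
    have e1 : (n : ℝ) + 1 + (α - 1) = n + α := by ring
    have e2 : (n : ℝ) + 1 + α = n + α + 1 := by ring
    push_cast
    simp only [rf, h1, if_false, e1, e2, Real.Gamma_add_one h2]
    by_cases h0 : (n : ℝ) = 0
    · simp [h0, hα0]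
    · have hg : Real.Gamma (n : ℝ) ≠ 0 :=
        (Real.Gamma_pos_of_pos (lt_of_le_of_ne hn (Ne.symm h0))).ne'
      rw [if_neg h0, Real.Gamma_add_one h0]
      field_simp

theorem right_focal_green_row_sum (a b : ℤ) (hab : 2 ≤ b - a) (α : ℝ)
    (hα1 : 1 < α) (hα2 : α < 2) :
    ∀ t : ℤ, a + 1 ≤ t → t ≤ b →
      ∑ s ∈ Finset.Icc (a + 2) b, Gr a α t s =
        (b - a - 1 : ℝ) * rf (t - a - 1 : ℝ) (α - 1) / Real.Gamma α -
          rf (t - a - 1 : ℝ) α / Real.Gamma (α + 1) := by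
  intro t ht1 ht2
  obtain ⟨n, hn⟩ : ∃ n : ℕ, t = a + 1 + n := ⟨(t - a - 1).toNat, by omega⟩
  have hα0 : α ≠ 0 := by linarith
  have hΓ : Real.Gamma α ≠ 0 := (Real.Gamma_pos_of_pos (by linarith)).ne'
  have hGr : ∀ s : ℤ, Gr a α t s = (1 / Real.Gamma α) * rf (t - a - 1 : ℝ) (α - 1) -
      (1 / Real.Gamma α) * (if s ≤ t then rf (t - s + 1 : ℝ) (α - 1) else 0) := by
    intro s
    unfold Gr
    by_cases h : s ≤ t
    · rw [if_neg (by omega), if_pos h]; ring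
    · rw [if_pos (by omega), if_neg h]; ring
  have hsum : ∑ s ∈ Finset.Icc (a + 2) b, (if s ≤ t then rf (t - s + 1 : ℝ) (α - 1) else 0) =
      ∑ k ∈ Finset.range n, rf ((k : ℝ) + 1) (α - 1) := by
    rw [← Finset.sum_filter]
    refine Finset.sum_bij' (fun s _ => (t - s).toNat) (fun k _ => t - (k : ℤ)) ?_ ?_ ?_ ?_ ?_
    · intro s hs
      simp only [Finset.mem_filter, Finset.mem_Icc, Finset.mem_range] at *
      omega
    · intro s hs
      simp only [Finset.mem_filter, Finset.mem_Icc, Finset.mem_range] at *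
      omega
    · intro s hs
      simp only [Finset.mem_filter, Finset.mem_Icc] at *
      omega
    · intro s hs
      omega
    · intro s hs
      simp only [Finset.mem_filter, Finset.mem_Icc] at hs
      have h : (((t - s).toNat : ℤ) : ℝ) = ((t - s : ℤ) : ℝ) := by
        rw [Int.toNat_of_nonneg (by omega)]
      push_cast at h
      rw [← h]
  have hcard : ((Finset.Icc (a + 2) b).card : ℝ) = b - a - 1 := by
    have h : (((Finset.Icc (a + 2) b).card : ℤ) : ℝ) = ((b - a - 1 : ℤ) : ℝ) := by
      rw [Int.card_Icc, Int.toNat_of_nonneg (by omega)]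
      push_cast
      ring
    push_cast at h
    exact h
  have hx : (t - a - 1 : ℝ) = n := by rw [hn]; push_cast; ring
  rw [Finset.sum_congr rfl (fun s _ => hGr s), Finset.sum_sub_distrib, Finset.sum_const,
    ← Finset.mul_sum, hsum, rf_sum_aux α hα1 n, nsmul_eq_mul, hcard, hx,
    Real.Gamma_add_one hα0]
  field_simp
end

section
/- (Lyapunov-type inequality, right-focal problem) Suppose u : N[a+1,b] → ℝ is not identically zero and satisfies the summation equation u(t) = ∑_{s=a+2}^{b} G_r(t, s) q(s) u(s) for every t with a+1 ≤ t ≤ b (this is the Green's-function form of the right-focal fractional boundary value problem ∇_a^α u(t) + q(t)u(t) = 0 for a+2 ≤ t ≤ b, with u(a+1) = 0 and ∇_a^{α−1} u(b) = 0). Then ∑_{s=a+2}^{b} |q(s)| ≥ Γ(α)/rf(b−a−1, α−1). -/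
theorem rf_aux_pos (r : ℝ) (hr : 0 < r) (n : ℕ) : 0 < rf ((n : ℝ) + 1) r := by
  have h : (0 : ℝ) < (n : ℝ) + 1 := by positivity
  unfold rf
  rw [if_neg h.ne']
  exact div_pos (Real.Gamma_pos_of_pos (by linarith)) (Real.Gamma_pos_of_pos h)

theorem rf_aux_mono (r : ℝ) (hr : 0 < r) : Monotone (fun n : ℕ => rf (n : ℝ) r) := by
  apply monotone_nat_of_le_succ
  intro n
  rcases Nat.eq_zero_or_pos n with h | h
  · subst h
    have := rf_aux_pos r hr 0
    have h0 : rf ((0 : ℕ) : ℝ) r = 0 := by simp [rf]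
    push_cast at *
    rw [h0]
    rw [zero_add] at this; exact this.le
  · have hn : (0 : ℝ) < n := by exact_mod_cast h
    have hn1 : (0 : ℝ) < (n : ℝ) + 1 := by linarith
    have e1 : Real.Gamma ((n : ℝ) + 1) = n * Real.Gamma n := Real.Gamma_add_one hn.ne'
    have e2 : Real.Gamma ((n : ℝ) + 1 + r) = (n + r) * Real.Gamma (n + r) := by
      rw [← Real.Gamma_add_one (by linarith : (n : ℝ) + r ≠ 0)]
      congr 1; ring
    have g1 := Real.Gamma_pos_of_pos hn
    have g2 := Real.Gamma_pos_of_pos (by linarith : 0 < (n : ℝ) + r)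
    push_cast
    unfold rf
    rw [if_neg hn.ne', if_neg hn1.ne', e1, e2, div_le_div_iff₀ g1 (mul_pos hn g1)]
    have := mul_pos g1 g2
    nlinarith [mul_pos hr this]

theorem rf_aux_int (r : ℝ) (hr : 0 < r) (m n : ℤ) (hm : 0 ≤ m) (hmn : m ≤ n) :
    0 ≤ rf (m : ℝ) r ∧ rf (m : ℝ) r ≤ rf (n : ℝ) r := by
  obtain ⟨k, rfl⟩ := Int.eq_ofNat_of_zero_le hm
  obtain ⟨l, rfl⟩ := Int.eq_ofNat_of_zero_le (hm.trans hmn)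
  have h0 : rf ((0 : ℕ) : ℝ) r = 0 := by simp [rf]
  have h1 := rf_aux_mono r hr (Nat.zero_le k)
  have h2 := rf_aux_mono r hr (by exact_mod_cast hmn : k ≤ l)
  simp only [h0] at h1
  simp only [Int.cast_natCast]
  exact ⟨h1, h2⟩

theorem Gr_aux (a b : ℤ) (α : ℝ) (hα1 : 1 < α) (t s : ℤ) (ht : a + 1 ≤ t) (htb : t ≤ b)
    (hs : a + 2 ≤ s) :
    |Gr a α t s| ≤ (1 / Real.Gamma α) * rf (b - a - 1 : ℝ) (α - 1) := by
  have hg : 0 < 1 / Real.Gamma α := one_div_pos.mpr (Real.Gamma_pos_of_pos (by linarith))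
  have h1 := rf_aux_int (α - 1) (by linarith) (t - a - 1) (b - a - 1) (by omega) (by omega)
  push_cast at h1
  unfold Gr
  split_ifs with h
  · rw [abs_mul, abs_of_pos hg, abs_of_nonneg h1.1]
    exact mul_le_mul_of_nonneg_left h1.2 hg.le
  · have h2 := rf_aux_int (α - 1) (by linarith) (t - s + 1) (t - a - 1) (by omega) (by omega)
    push_cast at h2
    rw [abs_mul, abs_of_pos hg, abs_of_nonneg (by linarith [h2.2])]
    exact mul_le_mul_of_nonneg_left (by linarith [h1.2, h2.1]) hg.le

theorem right_focal_lyapunov (a b : ℤ) (hab : 2 ≤ b - a) (α : ℝ)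
    (hα1 : 1 < α) (hα2 : α < 2) (q : ℤ → ℝ) (u : ℤ → ℝ)
    (hu : ∃ t : ℤ, a + 1 ≤ t ∧ t ≤ b ∧ u t ≠ 0)
    (heq : ∀ t : ℤ, a + 1 ≤ t → t ≤ b →
      u t = ∑ s ∈ Finset.Icc (a + 2) b, Gr a α t s * q s * u s) :
    Real.Gamma α / rf (b - a - 1 : ℝ) (α - 1) ≤ ∑ s ∈ Finset.Icc (a + 2) b, |q s| := by
  obtain ⟨t₁, h1, h2, h3⟩ := hu
  obtain ⟨t, ht, hmax⟩ := Finset.exists_max_image (Finset.Icc (a + 1) b) (fun t => |u t|)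
    ⟨t₁, Finset.mem_Icc.mpr ⟨h1, h2⟩⟩
  rw [Finset.mem_Icc] at ht
  have hM : 0 < |u t| :=
    (abs_pos.mpr h3).trans_le (hmax t₁ (Finset.mem_Icc.mpr ⟨h1, h2⟩))
  have hg : 0 < Real.Gamma α := Real.Gamma_pos_of_pos (by linarith)
  have hr : 0 < rf (b - a - 1 : ℝ) (α - 1) := by
    obtain ⟨k, hk⟩ := Int.eq_ofNat_of_zero_le (by omega : 0 ≤ b - a - 2)
    have := rf_aux_pos (α - 1) (by linarith) k
    have e : (b - a - 1 : ℝ) = (k : ℝ) + 1 := by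
      have : (b : ℝ) - a - 2 = k := by exact_mod_cast hk
      linarith
    rwa [e]
  set R := rf (b - a - 1 : ℝ) (α - 1) with hR
  have key : |u t| ≤ (1 / Real.Gamma α * R * ∑ s ∈ Finset.Icc (a + 2) b, |q s|) * |u t| := by
    calc |u t| = |∑ s ∈ Finset.Icc (a + 2) b, Gr a α t s * q s * u s| :=
          congrArg abs (heq t ht.1 ht.2)
      _ ≤ ∑ s ∈ Finset.Icc (a + 2) b, |Gr a α t s * q s * u s| := Finset.abs_sum_le_sum_abs _ _
      _ ≤ ∑ s ∈ Finset.Icc (a + 2) b, (1 / Real.Gamma α * R) * |q s| * |u t| := by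
          apply Finset.sum_le_sum
          intro s hs
          rw [Finset.mem_Icc] at hs
          have hG := Gr_aux a b α hα1 t s ht.1 ht.2 hs.1
          have hus := hmax s (Finset.mem_Icc.mpr ⟨by omega, hs.2⟩)
          rw [abs_mul, abs_mul]
          gcongr
      _ = _ := by rw [Finset.mul_sum, Finset.sum_mul]
  have h1' : 1 ≤ 1 / Real.Gamma α * R * ∑ s ∈ Finset.Icc (a + 2) b, |q s| := by
    by_contra hc
    push Not at hc
    nlinarith
  rw [div_le_iff₀ hr]
  have e : 1 / Real.Gamma α * R * ∑ s ∈ Finset.Icc (a + 2) b, |q s|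
      = ((∑ s ∈ Finset.Icc (a + 2) b, |q s|) * R) / Real.Gamma α := by ring
  rw [e, le_div_iff₀ hg] at h1'
  linarith
end
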